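/- Let a and b be positive integers with b > a and let n ≥ 2(a+b+2)(b+2). If G belongs to 𝒢_n^{a,b}, then n - b - 2 < ρ(G) < n - b - 1. -/

import Mathlib

open Finset Matrix

namespace SimpleGraph

variable {V : Type*} [Fintype V] [DecidableEq V]

lemma isHermitian_adjMatrix' (G : SimpleGraph V) [DecidableRel G.Adj] :
    (G.adjMatrix ℝ).IsHermitian := by
  rw [Matrix.IsHermitian, conjTranspose_eq_transpose_of_trivial, isSymm_adjMatrix]

/-- The spectral radius (largest adjacency eigenvalue) of a finite simple graph. -/
noncomputable def spectralRadius (G : SimpleGraph V) : ℝ :=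
  letI := Classical.decRel G.Adj
  ⨆ i, (isHermitian_adjMatrix' G).eigenvalues i

/-- `G` has an `[a,b]`-factor: a spanning subgraph all of whose degrees lie in `[a,b]`. -/
def HasABFactor (G : SimpleGraph V) (a b : ℕ) : Prop :=
  ∃ H : SimpleGraph V, H ≤ G ∧ ∀ v : V,
    letI := Classical.decRel H.Adj
    a ≤ H.degree v ∧ H.degree v ≤ b

/-- `G` has a fractional `[a,b]`-factor: a weighting of the edges by values in `[0,1]`
such that the total weight at every vertex lies in `[a,b]`. -/
def HasFractionalABFactor (G : SimpleGraph V) (a b : ℕ) : Prop :=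
  letI := Classical.decRel G.Adj
  ∃ h : Sym2 V → ℝ, (∀ e ∈ G.edgeSet, 0 ≤ h e ∧ h e ≤ 1) ∧
    ∀ v : V, (a : ℝ) ≤ ∑ e ∈ G.incidenceFinset v, h e ∧
      ∑ e ∈ G.incidenceFinset v, h e ≤ (b : ℝ)

end SimpleGraph

/-- `K_a ∨ (K_{n-a-b-1} ∪ (b+1)K_1)`, with vertices `0,…,a-1` forming the `K_a`,
vertices `a,…,n-b-2` forming the `K_{n-a-b-1}`, and the last `b+1` vertices independent. -/
def baseGraph (n a b : ℕ) : SimpleGraph (Fin n) :=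
  SimpleGraph.fromRel (fun i j => (i : ℕ) < a ∨ ((i : ℕ) < n - b - 1 ∧ (j : ℕ) < n - b - 1))

/-- The graph `H_n^{a,b}`: `baseGraph n a b` together with `a-1` extra edges joining the
vertex `n-b-1` (a fixed vertex of the independent part `(b+1)K_1`) to the `a-1`
vertices `a,…,2a-2` of the `K_{n-a-b-1}` part. -/
def Hgraph (n a b : ℕ) : SimpleGraph (Fin n) :=
  SimpleGraph.fromRel (fun i j => (i : ℕ) < a ∨ ((i : ℕ) < n - b - 1 ∧ (j : ℕ) < n - b - 1) ∨
    ((i : ℕ) = n - b - 1 ∧ a ≤ (j : ℕ) ∧ (j : ℕ) < 2 * a - 1))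

/-- The family `𝒢_n^{a,b}`: graphs obtained from `baseGraph n a b` by adding `a-1` edges
between the clique part `{a,…,n-b-2}` and the independent part `{n-b-1,…,n-1}`. -/
def GFamily (n a b : ℕ) (G : SimpleGraph (Fin n)) : Prop :=
  ∃ F : Finset (Fin n × Fin n), F.card = a - 1 ∧
    (∀ p ∈ F, a ≤ (p.1 : ℕ) ∧ (p.1 : ℕ) < n - b - 1 ∧ n - b - 1 ≤ (p.2 : ℕ)) ∧
    G = baseGraph n a b ⊔ SimpleGraph.fromEdgeSet ((fun p : Fin n × Fin n => s(p.1, p.2)) '' F)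

/-!
Write `m = n - b - 1` for the order of the clique `K_a ∨ K_{n-a-b-1}` contained in `G`.

Lower bound: if all adjacency eigenvalues were at most `m - 1`, the indicator vector of the clique
would attain the maximum of the Rayleigh quotient, hence be an eigenvector; but it vanishes at any
vertex outside the clique, while such a vertex has a neighbour in the clique.

Upper bound: give weight `1` to the clique and weight `1 / (b + 2)` to the other `b + 1` vertices.
Those have degree at most `2a - 1`, so the weighted neighbourhood sum at each vertex is less than
`m` times its weight, and a positive vector `x` with `A x < m x` bounds every eigenvalue by `m`.
-/

section Matrix

variable {ι : Type*} [Fintype ι]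

theorem abs_lt_of_mulVec_eq_smul_of_mulVec_lt {R : Type*} [Field R] [LinearOrder R]
    [IsStrictOrderedRing R] {A : Matrix ι ι R} (hA : ∀ i j, 0 ≤ A i j) {x : ι → R}
    (hx : ∀ i, 0 < x i) {c : R} (hAx : ∀ i, (A *ᵥ x) i < c * x i) {μ : R} {y : ι → R}
    (hy : y ≠ 0) (hAy : A *ᵥ y = μ • y) : |μ| < c := by
  obtain ⟨k, hk⟩ := Function.ne_iff.1 hy
  have : Nonempty ι := ⟨k⟩
  obtain ⟨i, hi⟩ := Finite.exists_max fun j => |y j| / x j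
  set t := |y i| / x i
  have ht_pos : 0 < t := (div_pos (abs_pos.2 hk) (hx k)).trans_le (hi k)
  have hy_le (j) : |y j| ≤ t * x j := (div_le_iff₀ (hx j)).1 (hi j)
  have hyi : |y i| = t * x i := (div_mul_cancel₀ _ (hx i).ne').symm
  have hlt : |μ| * (t * x i) < c * (t * x i) := calc
    |μ| * (t * x i) = |(A *ᵥ y) i| := by rw [hAy, Pi.smul_apply, smul_eq_mul, abs_mul, hyi]
    _ ≤ ∑ j, |A i j * y j| := abs_sum_le_sum_abs _ _
    _ ≤ ∑ j, t * (A i j * x j) := sum_le_sum fun j _ => by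
      rw [abs_mul, abs_of_nonneg (hA i j), mul_left_comm]
      exact mul_le_mul_of_nonneg_left (hy_le j) (hA i j)
    _ = t * (A *ᵥ x) i := (mul_sum _ _ _).symm
    _ < t * (c * x i) := mul_lt_mul_of_pos_left (hAx i) ht_pos
    _ = c * (t * x i) := mul_left_comm _ _ _
  exact lt_of_mul_lt_mul_right hlt (mul_pos ht_pos (hx i)).le

theorem indicator_one_dotProduct {R : Type*} [NonAssocSemiring R] (s : Finset ι) (x : ι → R) :
    (s : Set ι).indicator 1 ⬝ᵥ x = ∑ i ∈ s, x i := by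
  classical simp [dotProduct, Set.indicator_apply]

variable [DecidableEq ι] {𝕜 : Type*} [RCLike 𝕜] {A : Matrix ι ι 𝕜}

open scoped ComplexOrder MatrixOrder in
theorem posSemidef_smul_one_sub_of_eigenvalues_le (hA : A.IsHermitian) {c : ℝ}
    (hc : ∀ i, hA.eigenvalues i ≤ c) : (c • 1 - A).PosSemidef := by
  have hspec : ∀ μ ∈ spectrum ℝ A, μ ≤ c := by
    rwa [hA.spectrum_real_eq_range_eigenvalues, Set.forall_mem_range]
  rw [← Algebra.algebraMap_eq_smul_one, ← Matrix.le_iff]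
  exact le_algebraMap_of_spectrum_le hspec hA

theorem mulVec_eq_smul_of_eigenvalues_le_of_dotProduct_eq (hA : A.IsHermitian) {c : ℝ}
    (hc : ∀ i, hA.eigenvalues i ≤ c) {x : ι → 𝕜} (hx : star x ⬝ᵥ A *ᵥ x = c • (star x ⬝ᵥ x)) :
    A *ᵥ x = c • x := by
  have hsub : (c • 1 - A) *ᵥ x = c • x - A *ᵥ x := by
    rw [sub_mulVec, smul_mulVec, one_mulVec]
  have hzero : star x ⬝ᵥ (c • 1 - A) *ᵥ x = 0 := by
    rw [hsub, dotProduct_sub, dotProduct_smul, hx, sub_self]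
  rw [(posSemidef_smul_one_sub_of_eigenvalues_le hA hc).dotProduct_mulVec_zero_iff, hsub] at hzero
  exact (sub_eq_zero.1 hzero).symm

end Matrix

section Graph

variable {V : Type*} [Fintype V] [DecidableEq V] (G : SimpleGraph V) [DecidableRel G.Adj]

theorem spectralRadius_eq_iSup_eigenvalues :
    G.spectralRadius = ⨆ i, G.isHermitian_adjMatrix'.eigenvalues i := by
  unfold SimpleGraph.spectralRadius
  congr!

theorem eigenvalues_adjMatrix_le_spectralRadius (i : V) :
    G.isHermitian_adjMatrix'.eigenvalues i ≤ G.spectralRadius := by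
  rw [spectralRadius_eq_iSup_eigenvalues]
  exact le_ciSup (Set.finite_range _).bddAbove i

theorem exists_adjMatrix_mulVec_eq_spectralRadius_smul [Nonempty V] :
    ∃ y : V → ℝ, y ≠ 0 ∧ G.adjMatrix ℝ *ᵥ y = G.spectralRadius • y := by
  have hA := G.isHermitian_adjMatrix'
  obtain ⟨k, hk⟩ := exists_eq_ciSup_of_finite (f := hA.eigenvalues)
  refine ⟨(hA.eigenvectorBasis k).ofLp, ?_, ?_⟩
  · exact (WithLp.ofLp_eq_zero 2).ne.2 (hA.eigenvectorBasis.orthonormal.ne_zero k)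
  · rw [spectralRadius_eq_iSup_eigenvalues, ← hk]
    exact hA.mulVec_eigenvectorBasis k

variable {G}

theorem spectralRadius_lt_of_sum_neighborFinset_lt [Nonempty V] {x : V → ℝ} (hx : ∀ v, 0 < x v)
    {c : ℝ} (hc : ∀ v, ∑ u ∈ G.neighborFinset v, x u < c * x v) : G.spectralRadius < c := by
  obtain ⟨y, hy, hAy⟩ := exists_adjMatrix_mulVec_eq_spectralRadius_smul G
  have hnonneg (u v) : 0 ≤ G.adjMatrix ℝ u v := by
    rw [SimpleGraph.adjMatrix_apply]
    split_ifs <;> norm_num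
  have hAx (v) : (G.adjMatrix ℝ *ᵥ x) v < c * x v := by
    rw [SimpleGraph.adjMatrix_mulVec_apply]
    exact hc v
  exact (le_abs_self _).trans_lt (abs_lt_of_mulVec_eq_smul_of_mulVec_lt hnonneg hx hAx hy hAy)

theorem spectralRadius_lt_card_of_degree_mul_lt [Nonempty V] {s : Finset V}
    (hs : ∀ v ∉ s, G.degree v * (#sᶜ + 1) < #s) : G.spectralRadius < #s := by
  set d : ℝ := 1 / (#sᶜ + 1)
  have hd_pos : 0 < d := by positivity
  have hd_mul : (#sᶜ + 1) * d = 1 := mul_one_div_cancel (by positivity)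
  have hd_le : d ≤ 1 := div_le_one_of_le₀ (by linarith [(#sᶜ).cast_nonneg (α := ℝ)]) (by positivity)
  set x : V → ℝ := fun v => if v ∈ s then 1 else d with hx
  have hx_pos (v) : 0 < x v := by simp only [hx]; split_ifs <;> positivity
  have hx_le (v) : x v ≤ 1 := by simp only [hx]; split_ifs <;> simp [hd_le]
  have hx_sum : ∑ v, x v = #s + #sᶜ * d := by
    rw [← sum_add_sum_compl s, sum_ite_of_true fun _ h => h,
      sum_ite_of_false fun _ h => mem_compl.1 h]
    simp
  refine spectralRadius_lt_of_sum_neighborFinset_lt hx_pos fun v => ?_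
  by_cases hv : v ∈ s
  · have hxv : x v = 1 := if_pos hv
    calc ∑ u ∈ G.neighborFinset v, x u
        ≤ ∑ u ∈ univ.erase v, x u := sum_le_sum_of_subset_of_nonneg
          (fun u hu => by simpa using (G.ne_of_adj ((G.mem_neighborFinset v u).1 hu)).symm)
          fun u _ _ => (hx_pos u).le
      _ = #s + #sᶜ * d - 1 := by rw [sum_erase_eq_sub (mem_univ v), hx_sum, hxv]
      _ < #s * x v := by rw [hxv]; linarith
  · have hxv : x v = d := if_neg hv
    have hdeg : (G.degree v * (#sᶜ + 1) : ℝ) < #s := by exact_mod_cast hs v hv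
    calc ∑ u ∈ G.neighborFinset v, x u
        ≤ ∑ u ∈ G.neighborFinset v, 1 := sum_le_sum fun u _ => hx_le u
      _ = G.degree v * (#sᶜ + 1) * d := by rw [mul_assoc, hd_mul]; simp
      _ < #s * x v := by rw [hxv]; exact mul_lt_mul_of_pos_right hdeg hd_pos

theorem adjMatrix_mulVec_indicator_one_apply {R : Type*} [NonAssocSemiring R] (s : Finset V)
    (v : V) :
    (G.adjMatrix R *ᵥ (s : Set V).indicator 1) v = #(G.neighborFinset v ∩ s) := by
  rw [SimpleGraph.adjMatrix_mulVec_apply, sum_indicator_eq_sum_inter]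
  simp

end Graph

theorem card_sub_one_lt_spectralRadius_of_isClique {V : Type*} [Fintype V] [DecidableEq V]
    {G : SimpleGraph V} {s : Finset V} (hs : G.IsClique s) {u w : V} (hu : u ∈ s) (hw : w ∉ s)
    (huw : G.Adj w u) : (#s : ℝ) - 1 < G.spectralRadius := by
  classical
  by_contra! hle
  set x : V → ℝ := (s : Set V).indicator 1 with hx
  have hAx (v) (hv : v ∈ s) : (G.adjMatrix ℝ *ᵥ x) v = #s - 1 := by
    have hnbr : G.neighborFinset v ∩ s = s.erase v := by
      ext z
      simp only [mem_inter, SimpleGraph.mem_neighborFinset, mem_erase]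
      exact ⟨fun h => ⟨h.1.ne', h.2⟩, fun h => ⟨hs hv h.2 h.1.symm, h.2⟩⟩
    rw [adjMatrix_mulVec_indicator_one_apply, hnbr, cast_card_erase_of_mem hv]
  have hray : star x ⬝ᵥ G.adjMatrix ℝ *ᵥ x = ((#s : ℝ) - 1) • (star x ⬝ᵥ x) := by
    have hxx : x ⬝ᵥ x = #s := by
      rw [indicator_one_dotProduct, sum_indicator_subset _ subset_rfl]
      simp
    rw [star_trivial, hxx, indicator_one_dotProduct, sum_congr rfl hAx, sum_const,
      nsmul_eq_mul, smul_eq_mul, mul_comm]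
  have heig := mulVec_eq_smul_of_eigenvalues_le_of_dotProduct_eq G.isHermitian_adjMatrix'
    (fun i => (eigenvalues_adjMatrix_le_spectralRadius G i).trans hle) hray
  have hzero : (#(G.neighborFinset w ∩ s) : ℝ) = 0 := by
    rw [← adjMatrix_mulVec_indicator_one_apply, heig, Pi.smul_apply, hx,
      Set.indicator_of_notMem (mem_coe.not.2 hw), smul_zero]
  have hmem : u ∈ G.neighborFinset w ∩ s := by simp [huw, hu]
  exact card_ne_zero_of_mem hmem (Nat.cast_eq_zero.1 hzero)

/-- The vertices of the clique `K_a ∨ K_{n-a-b-1}` in a member of `𝒢_n^{a,b}`, that is, all but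
the last `b + 1` vertices. -/
def cliqueVertices (n b : ℕ) : Finset (Fin n) :=
  {i | (i : ℕ) < n - b - 1}

section Family

variable {n a b : ℕ}

theorem mem_cliqueVertices {i : Fin n} : i ∈ cliqueVertices n b ↔ (i : ℕ) < n - b - 1 := by
  simp [cliqueVertices]

theorem card_cliqueVertices : #(cliqueVertices n b) = n - b - 1 := by
  rw [cliqueVertices, Fin.card_filter_val_lt]
  omega

theorem card_compl_cliqueVertices (hb : b < n) : #(cliqueVertices n b)ᶜ = b + 1 := by
  rw [card_compl, card_cliqueVertices, Fintype.card_fin]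
  omega

namespace GFamily

variable {G : SimpleGraph (Fin n)}

theorem baseGraph_le (hG : GFamily n a b G) : baseGraph n a b ≤ G := by
  obtain ⟨F, -, -, rfl⟩ := hG
  exact le_sup_left

theorem isClique_cliqueVertices (hG : GFamily n a b G) : G.IsClique (cliqueVertices n b) := by
  intro i hi j hj hij
  rw [mem_coe, mem_cliqueVertices] at hi hj
  exact hG.baseGraph_le ⟨hij, .inl (.inr ⟨hi, hj⟩)⟩

theorem adj_of_val_lt (hG : GFamily n a b G) {i j : Fin n} (hi : (i : ℕ) < a) (hij : i ≠ j) :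
    G.Adj i j :=
  hG.baseGraph_le ⟨hij, .inl (.inl hi)⟩

theorem degree_le_of_notMem_cliqueVertices [DecidableRel G.Adj] (hG : GFamily n a b G)
    (han : a ≤ n - b - 1) {i : Fin n} (hi : i ∉ cliqueVertices n b) :
    G.degree i ≤ a + (a - 1) := by
  obtain ⟨F, hFcard, hF, hGF⟩ := hG
  rw [mem_cliqueVertices, not_lt] at hi
  have hnbr : G.neighborFinset i ⊆ ({j | (j : ℕ) < a} : Finset (Fin n)) ∪ F.image Prod.fst := by
    intro j hj
    rw [SimpleGraph.mem_neighborFinset, hGF, SimpleGraph.sup_adj] at hj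
    rw [mem_union, mem_filter_univ, mem_image]
    rcases hj with hbase | hextra
    · rw [baseGraph, SimpleGraph.fromRel_adj] at hbase
      omega
    · obtain ⟨⟨p, hp, hpe⟩, -⟩ := hextra
      rcases Sym2.eq_iff.1 hpe with ⟨h, -⟩ | ⟨h, -⟩
      · have := h ▸ (hF p hp).2.1
        omega
      · exact .inr ⟨p, hp, h⟩
  calc G.degree i ≤ #{j : Fin n | (j : ℕ) < a} + #(F.image Prod.fst) :=
        (card_le_card hnbr).trans (card_union_le _ _)
    _ ≤ a + (a - 1) := add_le_add (Fin.card_filter_val_lt.trans_le (min_le_right _ _))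
        (card_image_le.trans_eq hFcard)

end GFamily

theorem GFamily_spectralRadius_bounds_general {G : SimpleGraph (Fin n)} (hG : GFamily n a b G)
    (ha : 0 < a) (hn : 2 * a * (b + 2) ≤ n) :
    (n : ℝ) - b - 2 < G.spectralRadius ∧ G.spectralRadius < (n : ℝ) - b - 1 := by
  classical
  have hab : a + b + 2 ≤ n := by nlinarith
  have hcard : (#(cliqueVertices n b) : ℝ) = n - b - 1 := by
    rw [card_cliqueVertices, Nat.sub_sub, Nat.cast_sub (by omega)]
    push_cast
    ring
  constructor
  · let u : Fin n := ⟨0, by omega⟩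
    let w : Fin n := ⟨n - b - 1, by omega⟩
    have hu : u ∈ cliqueVertices n b := mem_cliqueVertices.2 (by simp only [u]; omega)
    have hw : w ∉ cliqueVertices n b := by simp [mem_cliqueVertices, w]
    have huw : G.Adj w u := (hG.adj_of_val_lt ha (ne_of_mem_of_not_mem hu hw)).symm
    linarith [card_sub_one_lt_spectralRadius_of_isClique hG.isClique_cliqueVertices hu hw huw]
  · have : Nonempty (Fin n) := ⟨⟨0, by omega⟩⟩
    rw [← hcard]
    refine spectralRadius_lt_card_of_degree_mul_lt fun v hv => ?_
    rw [card_compl_cliqueVertices (by omega), card_cliqueVertices]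
    have hdeg := hG.degree_le_of_notMem_cliqueVertices (by omega) hv
    calc G.degree v * (b + 1 + 1) ≤ (2 * a - 1) * (b + 2) := by gcongr; omega
      _ = 2 * a * (b + 2) - (b + 2) := by rw [Nat.sub_mul, one_mul]
      _ < n - b - 1 := by omega

end Family

/-- **Lemma (bounds on the spectral radius of members of `𝒢_n^{a,b}`).** -/
theorem GFamily_spectralRadius_bounds (a b n : ℕ) (ha : 0 < a) (hab : a < b)
    (hn : 2 * (a + b + 2) * (b + 2) ≤ n)
    (G : SimpleGraph (Fin n)) (hG : GFamily n a b G) :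
    (n : ℝ) - b - 2 < G.spectralRadius ∧ G.spectralRadius < (n : ℝ) - b - 1 :=
  GFamily_spectralRadius_bounds_general hG ha (le_trans (by gcongr; omega) hn)
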